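/- Fix θ ∈ [0, π/2] and finite families of unit vectors u_1,…,u_M and v_1,…,v_N in ℝ³. Define the behaviour P(a,b|x,y) = (1/4)·(1 + a·cosθ·(u_x)_3 + b·cosθ·(v_y)_3 + a·b·[(u_x)_3·(v_y)_3 + sinθ·((u_x)_1·(v_y)_1 − (u_x)_2·(v_y)_2)]) for a,b ∈ {−1,+1}, x ∈ {1,…,M}, y ∈ {1,…,N} (the quantum statistics of the pure two-qubit state cos(θ/2)|00⟩ + sin(θ/2)|11⟩ under projective spin measurements along u_x and v_y; these are valid probabilities). Then there exist a behaviour P_L admitting an LHV+FHV model and a behaviour Q such that P = cosθ·P_L + (1−cosθ)·Q pointwise; consequently the local fraction and free fraction of P are at least cos θ. -/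

import Mathlib

/-!
Let `c = cos θ`, let `e` be the third basis vector and, for Bob's direction `v`, let
`w = (sin θ * v₁, -sin θ * v₂, v₃)`, so that the quantum correlation is `⟪u, w⟫`. As
`‖w ± c • e‖ = 1 ± c * v₃`, the vector `w` lies on the ellipsoid of major semi-axis `1` with foci
`± c • e`.

The hidden variable is a standard Gaussian vector `g` reweighted by `|⟪e, g⟫|`. Alice answers
`sign ⟪u, g⟫ * sign ⟪e, g⟫`; the mean of Bob's answer is `sign ⟪e, g⟫` times `⟪w, g⟫` clamped to
`± c * |⟪e, g⟫|`, divided by `c * |⟪e, g⟫|`. By isotropy `𝔼 |⟪w, g⟫|` is proportional to `‖w‖` and,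
for unit `u`, `𝔼 (sign ⟪u, g⟫ * ⟪w, g⟫)` to `⟪u, w⟫`, with the same constant. Hence `c` times the
marginals of this model are `c * ⟪u, e⟫` and `(‖w + c • e‖ - ‖w - c • e‖) / 2 = c * v₃`, those of
the quantum behaviour. Without clamping, `c` times the correlation would be exactly `⟪u, w⟫`;
clamping changes this by at most `(‖w + c • e‖ + ‖w - c • e‖) / 2 - c = 1 - c`. What remains of the
quantum behaviour is therefore `1 - c` times a behaviour with unbiased marginals.
-/

open scoped BigOperators Classical
open Finset

noncomputable section

/-- The real value `±1` associated with a Boolean outcome. -/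
def outVal (a : Bool) : ℝ := if a then 1 else -1

/-- A behaviour: nonnegative probabilities summing to one for every pair of settings. -/
def IsBehaviour {M N : ℕ} (P : Bool → Bool → Fin M → Fin N → ℝ) : Prop :=
  (∀ a b x y, 0 ≤ P a b x y) ∧ (∀ x y, ∑ a, ∑ b, P a b x y = 1)

/-- A behaviour admits an LHV+FHV model (is local-free). -/
def LocalFree {M N : ℕ} (P : Bool → Bool → Fin M → Fin N → ℝ) : Prop :=
  ∃ (n : ℕ) (q : Fin n → ℝ) (A : Bool → Fin M → Fin n → ℝ) (B : Bool → Fin N → Fin n → ℝ),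
    (∀ l, 0 ≤ q l) ∧ (∑ l, q l = 1) ∧
    (∀ a x l, 0 ≤ A a x l) ∧ (∀ x l, ∑ a, A a x l = 1) ∧
    (∀ b y l, 0 ≤ B b y l) ∧ (∀ y l, ∑ b, B b y l = 1) ∧
    (∀ a b x y, P a b x y = ∑ l, q l * A a x l * B b y l)

/-- The quantum behaviour of the pure two-qubit state `cos(θ/2)|00⟩ + sin(θ/2)|11⟩`
under projective spin measurements along unit vectors `u x` and `v y`. -/
def qBehaviour {M N : ℕ} (θ : ℝ) (u : Fin M → EuclideanSpace ℝ (Fin 3))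
    (v : Fin N → EuclideanSpace ℝ (Fin 3)) : Bool → Bool → Fin M → Fin N → ℝ :=
  fun a b x y => (1 / 4) *
    (1 + outVal a * Real.cos θ * u x 2 + outVal b * Real.cos θ * v y 2 +
      outVal a * outVal b *
        (u x 2 * v y 2 + Real.sin θ * (u x 0 * v y 0 - u x 1 * v y 1)))

open MeasureTheory ProbabilityTheory SignType
open scoped RealInnerProductSpace

/-! ### Finite models from continuous hidden variables -/

section Responses

variable {ι : Type*}

/-- A local response function: for each setting, a probability distribution on the outcomes. -/
def IsResponse (A : Bool → ι → ℝ) : Prop :=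
  (∀ a x, 0 ≤ A a x) ∧ ∀ x, ∑ a, A a x = 1

lemma isResponse_deterministic (σ : ι → Bool) :
    IsResponse fun a x => if σ x = a then 1 else 0 :=
  ⟨fun a x => by positivity, fun x => by simp⟩

/-- The response function whose `±1`-valued outcome has mean `f x` at the setting `x`. -/
def meanResponse (f : ι → ℝ) (a : Bool) (x : ι) : ℝ := (1 + outVal a * f x) / 2

lemma isResponse_meanResponse {f : ι → ℝ} (hf : ∀ x, |f x| ≤ 1) : IsResponse (meanResponse f) := by
  refine ⟨fun a x => ?_, fun x => ?_⟩
  · have := abs_le.1 (hf x)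
    cases a <;> simp [meanResponse, outVal] <;> linarith
  · simp [meanResponse, outVal]
    ring

variable [Fintype ι]

/-- The probability that independent responses at all settings follow the deterministic
strategy `σ`. -/
def strategyWeight (A : Bool → ι → ℝ) (σ : ι → Bool) : ℝ := ∏ x, A (σ x) x

lemma strategyWeight_nonneg {A : Bool → ι → ℝ} (hA : IsResponse A) (σ : ι → Bool) :
    0 ≤ strategyWeight A σ :=
  Finset.prod_nonneg fun x _ => hA.1 (σ x) x

lemma strategyWeight_le_one {A : Bool → ι → ℝ} (hA : IsResponse A) (σ : ι → Bool) :
    strategyWeight A σ ≤ 1 := by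
  refine Finset.prod_le_one (fun x _ => hA.1 (σ x) x) fun x _ => ?_
  rw [← hA.2 x]
  exact Finset.single_le_sum (fun a _ => hA.1 a x) (Finset.mem_univ (σ x))

variable [DecidableEq ι]

lemma sum_strategyWeight {A : Bool → ι → ℝ} (hA : IsResponse A) : ∑ σ, strategyWeight A σ = 1 := by
  simp only [strategyWeight, ← Fintype.prod_sum fun x a => A a x, hA.2, Finset.prod_const_one]

lemma sum_strategyWeight_mul_ite {A : Bool → ι → ℝ} (hA : IsResponse A) (a : Bool) (x : ι) :
    ∑ σ, strategyWeight A σ * (if σ x = a then 1 else 0) = A a x := by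
  have hprod : ∀ σ : ι → Bool, strategyWeight A σ * (if σ x = a then 1 else 0) =
      ∏ i, A (σ i) i * (if i = x then (if σ i = a then 1 else 0) else 1) := fun σ => by
    rw [Finset.prod_mul_distrib, Finset.prod_ite_eq' Finset.univ x]
    simp only [strategyWeight, Finset.mem_univ, if_true]
  calc ∑ σ, strategyWeight A σ * (if σ x = a then 1 else 0)
      = ∏ i, ∑ b, A b i * (if i = x then (if b = a then 1 else 0) else 1) := by
        simp only [hprod,
          Fintype.prod_sum fun i b => A b i * (if i = x then (if b = a then 1 else 0) else 1)]
    _ = ∑ b, A b x * (if x = x then (if b = a then 1 else 0) else 1) :=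
        Fintype.prod_eq_single x fun i hi => by simp only [hi, if_false, mul_one, hA.2]
    _ = A a x := by simp

end Responses

section LocalFree

variable {M N : ℕ}

lemma LocalFree.isBehaviour {P : Bool → Bool → Fin M → Fin N → ℝ} (hP : LocalFree P) :
    IsBehaviour P := by
  obtain ⟨n, q, A, B, hq, hq1, hA, hA1, hB, hB1, hP⟩ := hP
  refine ⟨fun a b x y => ?_, fun x y => ?_⟩
  · rw [hP]
    exact Finset.sum_nonneg fun l _ => mul_nonneg (mul_nonneg (hq l) (hA a x l)) (hB b y l)
  · calc ∑ a, ∑ b, P a b x y = ∑ l, ∑ a, ∑ b, q l * A a x l * B b y l := by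
          simp only [hP,
            Finset.sum_comm (s := Finset.univ (α := Bool)) (t := Finset.univ (α := Fin n))]
      _ = 1 := by simp only [← Finset.mul_sum, hB1, mul_one, hA1, hq1]

lemma LocalFree.of_fintype {Λ : Type*} [Fintype Λ] {q : Λ → ℝ} {A : Λ → Bool → Fin M → ℝ}
    {B : Λ → Bool → Fin N → ℝ} (hq : ∀ l, 0 ≤ q l) (hq1 : ∑ l, q l = 1)
    (hA : ∀ l, IsResponse (A l)) (hB : ∀ l, IsResponse (B l)) :
    LocalFree fun a b x y => ∑ l, q l * A l a x * B l b y := by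
  let e := (Fintype.equivFin Λ).symm
  exact ⟨Fintype.card Λ, q ∘ e, fun a x l => A (e l) a x, fun b y l => B (e l) b y,
    fun l => hq (e l), (e.sum_comp q).trans hq1, fun a x l => (hA (e l)).1 a x,
    fun x l => (hA (e l)).2 x, fun b y l => (hB (e l)).1 b y, fun y l => (hB (e l)).2 y,
    fun a b x y => (e.sum_comp fun l => q l * A l a x * B l b y).symm⟩

variable {Ω : Type*} [MeasurableSpace Ω] (ν : Measure Ω) [IsProbabilityMeasure ν]

lemma integrable_strategyWeight_mul {A : Ω → Bool → Fin M → ℝ} {B : Ω → Bool → Fin N → ℝ}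
    (hA : ∀ ω, IsResponse (A ω)) (hB : ∀ ω, IsResponse (B ω))
    (hAm : ∀ a x, Measurable (A · a x)) (hBm : ∀ b y, Measurable (B · b y))
    (σ : Fin M → Bool) (τ : Fin N → Bool) :
    Integrable (fun ω => strategyWeight (A ω) σ * strategyWeight (B ω) τ) ν := by
  refine Integrable.of_bound (C := 1) (Measurable.aestronglyMeasurable ?_)
    (Filter.Eventually.of_forall fun ω => ?_)
  · unfold strategyWeight
    fun_prop
  · have hB0 := strategyWeight_nonneg (hB ω) τ
    rw [Real.norm_of_nonneg (mul_nonneg (strategyWeight_nonneg (hA ω) σ) hB0)]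
    exact mul_le_one₀ (strategyWeight_le_one (hA ω) σ) hB0 (strategyWeight_le_one (hB ω) τ)

/-- As there are finitely many settings, the hidden variable may be replaced by the pair of
deterministic strategies that the two parties end up following, which has finitely many values. -/
theorem localFree_integral {A : Ω → Bool → Fin M → ℝ} {B : Ω → Bool → Fin N → ℝ}
    (hA : ∀ ω, IsResponse (A ω)) (hB : ∀ ω, IsResponse (B ω))
    (hAm : ∀ a x, Measurable (A · a x)) (hBm : ∀ b y, Measurable (B · b y)) :
    LocalFree fun a b x y => ∫ ω, A ω a x * B ω b y ∂ν := by
  let W (s : (Fin M → Bool) × (Fin N → Bool)) (ω : Ω) : ℝ :=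
    strategyWeight (A ω) s.1 * strategyWeight (B ω) s.2
  have hW : ∀ s, Integrable (W s) ν := fun s =>
    integrable_strategyWeight_mul ν hA hB hAm hBm s.1 s.2
  have hsum : ∑ s, ∫ ω, W s ω ∂ν = 1 := by
    simp only [← integral_finsetSum _ fun s _ => hW s, W, Fintype.sum_prod_type,
      ← Finset.mul_sum, sum_strategyWeight (hA _), sum_strategyWeight (hB _), mul_one,
      integral_const, probReal_univ, smul_eq_mul]
  have hprod : ∀ a b x y ω, A ω a x * B ω b y =
      ∑ s, W s ω * (if s.1 x = a then 1 else 0) * (if s.2 y = b then 1 else 0) := by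
    intro a b x y ω
    rw [← sum_strategyWeight_mul_ite (hA ω) a x, ← sum_strategyWeight_mul_ite (hB ω) b y,
      Finset.sum_mul_sum, Fintype.sum_prod_type]
    exact Finset.sum_congr rfl fun σ _ => Finset.sum_congr rfl fun τ _ => by ring
  have hmix : ∀ a b x y, ∫ ω, A ω a x * B ω b y ∂ν =
      ∑ s, (∫ ω, W s ω ∂ν) * (if s.1 x = a then 1 else 0) * (if s.2 y = b then 1 else 0) := by
    intro a b x y
    simp only [hprod, ← integral_mul_const]
    exact integral_finsetSum _ fun s _ => ((hW s).mul_const _).mul_const _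
  simp only [hmix]
  refine LocalFree.of_fintype (fun s => integral_nonneg fun ω => ?_) hsum
    (fun s => isResponse_deterministic s.1) fun s => isResponse_deterministic s.2
  exact mul_nonneg (strategyWeight_nonneg (hA ω) s.1) (strategyWeight_nonneg (hB ω) s.2)

/-- The two-outcome no-signalling table with marginal means `α x`, `β y` and correlations
`E x y`. -/
def correlatorTable (α : Fin M → ℝ) (β : Fin N → ℝ) (E : Fin M → Fin N → ℝ) :
    Bool → Bool → Fin M → Fin N → ℝ :=
  fun a b x y => (1 / 4) *
    (1 + outVal a * α x + outVal b * β y + outVal a * outVal b * E x y)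

theorem localFree_correlatorTable {f : Fin M → Ω → ℝ} {h : Fin N → Ω → ℝ}
    (hf : ∀ x, Measurable (f x)) (hh : ∀ y, Measurable (h y))
    (hf1 : ∀ x ω, |f x ω| ≤ 1) (hh1 : ∀ y ω, |h y ω| ≤ 1) :
    LocalFree (correlatorTable (fun x => ∫ ω, f x ω ∂ν) (fun y => ∫ ω, h y ω ∂ν)
      fun x y => ∫ ω, f x ω * h y ω ∂ν) := by
  have hfi : ∀ x, Integrable (f x) ν := fun x =>
    Integrable.of_bound (hf x).aestronglyMeasurable 1 (Filter.Eventually.of_forall (hf1 x))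
  have hhi : ∀ y, Integrable (h y) ν := fun y =>
    Integrable.of_bound (hh y).aestronglyMeasurable 1 (Filter.Eventually.of_forall (hh1 y))
  have hfhi : ∀ x y, Integrable (fun ω => f x ω * h y ω) ν := fun x y =>
    (hfi x).mul_bdd (hh y).aestronglyMeasurable (Filter.Eventually.of_forall (hh1 y))
  have hmodel := localFree_integral ν (A := fun ω => meanResponse (f · ω))
    (B := fun ω => meanResponse (h · ω)) (fun ω => isResponse_meanResponse (hf1 · ω))
    (fun ω => isResponse_meanResponse (hh1 · ω)) (by unfold meanResponse; fun_prop)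
    (by unfold meanResponse; fun_prop)
  convert hmodel using 5 with a b x y
  have hexpand : ∀ ω, meanResponse (f · ω) a x * meanResponse (h · ω) b y =
      (1 / 4) * (1 + outVal a * f x ω + outVal b * h y ω +
        outVal a * outVal b * (f x ω * h y ω)) := fun ω => by
    simp only [meanResponse]
    ring
  have hfa := (hfi x).const_mul (outVal a)
  have hhb := (hhi y).const_mul (outVal b)
  have hone := integrable_const (μ := ν) (1 : ℝ)
  simp only [hexpand, correlatorTable]
  rw [integral_const_mul, integral_add ((hone.fun_add hfa).fun_add hhb) ((hfhi x y).const_mul _),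
    integral_add (hone.fun_add hfa) hhb, integral_add hone hfa]
  simp only [integral_const_mul, integral_const, probReal_univ, smul_eq_mul, mul_one]

lemma isBehaviour_correlatorTable_zero {E : Fin M → Fin N → ℝ} (hE : ∀ x y, |E x y| ≤ 1) :
    IsBehaviour (correlatorTable 0 0 E) := by
  refine ⟨fun a b x y => ?_, fun x y => ?_⟩
  · have := abs_le.1 (hE x y)
    cases a <;> cases b <;> simp [correlatorTable, outVal] <;> linarith
  · simp [correlatorTable, outVal]
    ring

lemma exists_isBehaviour_mixture {c : ℝ} {C E : Fin M → Fin N → ℝ}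
    (hCE : ∀ x y, |C x y - c * E x y| ≤ 1 - c) (α : Fin M → ℝ) (β : Fin N → ℝ) :
    ∃ Q, IsBehaviour Q ∧ ∀ a b x y,
      correlatorTable (fun x => c * α x) (fun y => c * β y) C a b x y =
        c * correlatorTable α β E a b x y + (1 - c) * Q a b x y := by
  have hc : Fin M → Fin N → 0 ≤ 1 - c := fun x y => (abs_nonneg _).trans (hCE x y)
  refine ⟨correlatorTable 0 0 fun x y => (C x y - c * E x y) / (1 - c),
    isBehaviour_correlatorTable_zero fun x y => ?_, fun a b x y => ?_⟩
  · rw [abs_div, abs_of_nonneg (hc x y)]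
    exact div_le_one_of_le₀ (hCE x y) (hc x y)
  -- For `c = 1` the quotient is the junk value `0`, but then `C = c * E`.
  · have hresidual : (1 - c) * ((C x y - c * E x y) / (1 - c)) = C x y - c * E x y :=
      mul_div_cancel_of_imp' fun h1 => abs_nonpos_iff.1 ((hCE x y).trans h1.le)
    simp only [correlatorTable, Pi.zero_apply]
    linear_combination (-(1 / 4) * outVal a * outVal b) * hresidual

end LocalFree

/-! ### Isotropic measures -/

lemma measurable_sign_coe : Measurable fun t : ℝ => (sign t : ℝ) := by
  simp only [sign_apply, apply_ite ((↑) : SignType → ℝ)]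
  exact Measurable.ite measurableSet_Ioi measurable_const
    (Measurable.ite measurableSet_Iio measurable_const measurable_const)

lemma abs_sign_coe_le_one (t : ℝ) : |(sign t : ℝ)| ≤ 1 := by
  rcases sign t with _ | _ | _ <;> simp

section Isotropic

variable {E : Type*} [NormedAddCommGroup E] [InnerProductSpace ℝ E]

lemma inner_reflection_right (K : Submodule ℝ E) [K.HasOrthogonalProjection] (w g : E) :
    ⟪w, K.reflection g⟫ = ⟪K.reflection w, g⟫ := by
  rw [← K.reflection.inner_map_map w, K.reflection_reflection]

variable [MeasurableSpace E] {μ : Measure E}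

lemma integrable_inner (hint : Integrable id μ) (w : E) : Integrable (fun g => ⟪w, g⟫) μ :=
  hint.const_inner w

variable [BorelSpace E]

lemma integrable_sign_inner_mul {F : E → ℝ} (hF : Integrable F μ) (u : E) :
    Integrable (fun g => sign ⟪u, g⟫ * F g) μ :=
  hF.bdd_mul (measurable_sign_coe.comp (by fun_prop)).aestronglyMeasurable
    (Filter.Eventually.of_forall fun _ => abs_sign_coe_le_one _)

lemma integral_comp_linearIsometryEquiv {L : E ≃ₗᵢ[ℝ] E} (hL : MeasurePreserving L μ μ)
    (F : E → ℝ) : ∫ g, F (L g) ∂μ = ∫ g, F g ∂μ :=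
  hL.integral_comp L.toHomeomorph.measurableEmbedding F

variable (hμ : ∀ L : E ≃ₗᵢ[ℝ] E, MeasurePreserving L μ μ)
include hμ

/-- The reflection exchanging `w` and `‖w‖ • e` preserves `μ`. -/
lemma integral_abs_inner_of_isotropic {e : E} (he : ‖e‖ = 1) (w : E) :
    ∫ g, |⟪w, g⟫| ∂μ = ‖w‖ * ∫ g, |⟪e, g⟫| ∂μ := by
  let K := (Submodule.span ℝ {w - ‖w‖ • e})ᗮ
  have hKw : K.reflection w = ‖w‖ • e := Submodule.reflection_sub (by simp [norm_smul, he])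
  calc ∫ g, |⟪w, g⟫| ∂μ = ∫ g, |⟪w, K.reflection g⟫| ∂μ :=
        (integral_comp_linearIsometryEquiv (hμ K.reflection) _).symm
    _ = ‖w‖ * ∫ g, |⟪e, g⟫| ∂μ := by
        simp only [inner_reflection_right, hKw, real_inner_smul_left, abs_mul, abs_norm,
          integral_const_mul]

/-- The reflection `R` in the line of `u` preserves `⟪u, g⟫`, so `w` may be replaced by
`(w + R w) / 2 = ⟪u, w⟫ • u`. -/
lemma integral_sign_inner_mul_inner_of_isotropic (hint : Integrable id μ) {u : E} (hu : ‖u‖ = 1)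
    (w : E) : ∫ g, sign ⟪u, g⟫ * ⟪w, g⟫ ∂μ = ⟪u, w⟫ * ∫ g, |⟪u, g⟫| ∂μ := by
  let R := (Submodule.span ℝ {u}).reflection
  have hR : ∀ w g, ⟪w, R g⟫ = ⟪R w, g⟫ := inner_reflection_right _
  have hRu : R u = u :=
    Submodule.reflection_mem_subspace_eq_self (Submodule.mem_span_singleton_self u)
  have hRw : R w = (2 * ⟪u, w⟫) • u - w := by
    simp [R, Submodule.reflection_singleton_apply, hu, mul_smul, two_smul]
  have hreflect : ∫ g, sign ⟪u, g⟫ * ⟪w, g⟫ ∂μ = ∫ g, sign ⟪u, g⟫ * ⟪R w, g⟫ ∂μ := by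
    rw [← integral_comp_linearIsometryEquiv (hμ R)]
    simp only [hR, hRu]
  have hsplit : ∫ g, sign ⟪u, g⟫ * ⟪R w, g⟫ ∂μ =
      2 * ⟪u, w⟫ * ∫ g, |⟪u, g⟫| ∂μ - ∫ g, sign ⟪u, g⟫ * ⟪w, g⟫ ∂μ := by
    rw [← integral_const_mul, ← integral_sub ((integrable_inner hint u).abs.const_mul _)
      (integrable_sign_inner_mul (integrable_inner hint w) u)]
    refine integral_congr_ae (Filter.Eventually.of_forall fun g => ?_)
    simp only [hRw, inner_sub_left, real_inner_smul_left, ← sign_mul_self ⟪u, g⟫]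
    ring
  linarith

end Isotropic

/-! ### The size-biased Gaussian law -/

section Gaussian

variable {E : Type*} [NormedAddCommGroup E] [InnerProductSpace ℝ E] [FiniteDimensional ℝ E]
  [MeasurableSpace E] [BorelSpace E]

lemma measurePreserving_stdGaussian (L : E ≃ₗᵢ[ℝ] E) :
    MeasurePreserving L (stdGaussian E) (stdGaussian E) :=
  ⟨L.continuous.measurable, stdGaussian_map L⟩

lemma integrable_inner_stdGaussian (w : E) : Integrable (fun g => ⟪w, g⟫) (stdGaussian E) :=
  integrable_inner IsGaussian.integrable_id w

/-- The first absolute moment `𝔼 |⟪w, g⟫|` of a standard Gaussian vector `g` along `w`. -/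
def gaussianAbsMoment (w : E) : ℝ := ∫ g, |⟪w, g⟫| ∂stdGaussian E

lemma gaussianAbsMoment_eq_norm_mul {e : E} (he : ‖e‖ = 1) (w : E) :
    gaussianAbsMoment w = ‖w‖ * gaussianAbsMoment e :=
  integral_abs_inner_of_isotropic measurePreserving_stdGaussian he w

lemma integral_sign_inner_mul_inner_stdGaussian {u : E} (hu : ‖u‖ = 1) (w : E) :
    ∫ g, sign ⟪u, g⟫ * ⟪w, g⟫ ∂stdGaussian E = ⟪u, w⟫ * gaussianAbsMoment u :=
  integral_sign_inner_mul_inner_of_isotropic measurePreserving_stdGaussian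
    IsGaussian.integrable_id hu w

lemma gaussianAbsMoment_pos {w : E} (hw : w ≠ 0) : 0 < gaussianAbsMoment w := by
  refine (integral_nonneg fun _ => abs_nonneg _).lt_of_ne' fun hzero => ?_
  have hae : innerSL ℝ w =ᵐ[stdGaussian E] 0 := by
    filter_upwards [(integral_eq_zero_iff_of_nonneg (fun _ => abs_nonneg _)
      (integrable_inner_stdGaussian w).abs).1 hzero] with g hg using abs_eq_zero.1 hg
  have hvar := variance_dual_stdGaussian (innerSL ℝ w)
  rw [variance_congr hae, variance_zero, innerSL_apply_norm] at hvar
  exact pow_ne_zero 2 (norm_ne_zero_iff.2 hw) hvar.symm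

/-- The law of the hidden variable: the standard Gaussian law with density proportional to
`|⟪e, g⟫|`. -/
def sizeBiasedGaussian (e : E) : Measure E :=
  (stdGaussian E).withDensity fun g => ENNReal.ofReal (|⟪e, g⟫| / gaussianAbsMoment e)

lemma isProbabilityMeasure_sizeBiasedGaussian {e : E} (he : e ≠ 0) :
    IsProbabilityMeasure (sizeBiasedGaussian e) := by
  have hK := gaussianAbsMoment_pos he
  refine ⟨?_⟩
  rw [sizeBiasedGaussian, withDensity_apply _ MeasurableSet.univ, Measure.restrict_univ,
    ← ofReal_integral_eq_lintegral_ofReal ((integrable_inner_stdGaussian e).abs.div_const _)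
      (Filter.Eventually.of_forall fun g => by positivity),
    integral_div, ← gaussianAbsMoment, div_self hK.ne', ENNReal.ofReal_one]

lemma integral_sizeBiasedGaussian {e : E} (he : e ≠ 0) (F : E → ℝ) :
    ∫ g, F g ∂sizeBiasedGaussian e =
      (∫ g, |⟪e, g⟫| * F g ∂stdGaussian E) / gaussianAbsMoment e := by
  have hK := gaussianAbsMoment_pos he
  rw [sizeBiasedGaussian, integral_withDensity_eq_integral_toReal_smul (by fun_prop)
    (Filter.Eventually.of_forall fun _ => ENNReal.ofReal_lt_top), ← integral_div]
  refine integral_congr_ae (Filter.Eventually.of_forall fun g => ?_)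
  dsimp only
  rw [ENNReal.toReal_ofReal (by positivity), smul_eq_mul, div_mul_eq_mul_div]

end Gaussian

/-! ### The local model -/

/-- The left side is the error of clamping `y` to `[-c * |t|, c * |t|]`, and
`max |y| |s| = (|y + s| + |y - s|) / 2`. -/
lemma abs_sub_sign_mul_le {c : ℝ} (hc : 0 ≤ c) (y t : ℝ) :
    |y - sign t * ((|y + c * t| - |y - c * t|) / 2)| ≤
      (|y + c * t| + |y - c * t|) / 2 - c * |t| := by
  rcases lt_trichotomy t 0 with ht | rfl | ht
  · have hct : c * t ≤ 0 := mul_nonpos_of_nonneg_of_nonpos hc ht.le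
    rw [sign_neg ht, abs_of_neg ht, coe_neg_one]
    grind
  · simp
  · have hct : 0 ≤ c * t := mul_nonneg hc ht.le
    rw [sign_pos ht, abs_of_pos ht, coe_one]
    grind

section Model

variable {E : Type*} [NormedAddCommGroup E] [InnerProductSpace ℝ E]

/-- Alice's answer along `u` at the hidden variable `g`. -/
def aliceAnswer (e u g : E) : ℝ := sign ⟪u, g⟫ * sign ⟪e, g⟫

/-- The mean of Bob's answer at the hidden variable `g`, where `w` is the vector for which the
target correlation with Alice's direction `u` is `⟪u, w⟫`: up to the sign of `⟪e, g⟫`, this is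
`⟪w, g⟫` clamped to `[-c * |⟪e, g⟫|, c * |⟪e, g⟫|]`, divided by `c * |⟪e, g⟫|`. It is `0` when
the denominator vanishes. -/
def bobMean (e : E) (c : ℝ) (w g : E) : ℝ :=
  ((|⟪w + c • e, g⟫| - |⟪w - c • e, g⟫|) / 2) / (c * |⟪e, g⟫|)

lemma abs_aliceAnswer_le_one (e u g : E) : |aliceAnswer e u g| ≤ 1 := by
  rw [aliceAnswer, abs_mul]
  exact mul_le_one₀ (abs_sign_coe_le_one _) (abs_nonneg _) (abs_sign_coe_le_one _)

lemma abs_half_abs_inner_sub_le {c : ℝ} (hc : 0 ≤ c) (e w g : E) :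
    |(|⟪w + c • e, g⟫| - |⟪w - c • e, g⟫|) / 2| ≤ c * |⟪e, g⟫| := by
  have hdiff : ⟪w + c • e, g⟫ - ⟪w - c • e, g⟫ = 2 * (c * ⟪e, g⟫) := by
    rw [inner_add_left, inner_sub_left, real_inner_smul_left]
    ring
  calc |(|⟪w + c • e, g⟫| - |⟪w - c • e, g⟫|) / 2|
      = |(|⟪w + c • e, g⟫| - |⟪w - c • e, g⟫|)| / 2 := by rw [abs_div, abs_two]
    _ ≤ |⟪w + c • e, g⟫ - ⟪w - c • e, g⟫| / 2 :=
        div_le_div_of_nonneg_right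
          (abs_abs_sub_abs_le_abs_sub ⟪w + c • e, g⟫ ⟪w - c • e, g⟫) zero_le_two
    _ = c * |⟪e, g⟫| := by
        rw [hdiff, abs_mul, abs_two, abs_mul, abs_of_nonneg hc, mul_div_cancel_left₀ _ two_ne_zero]

lemma abs_bobMean_le_one {c : ℝ} (hc : 0 ≤ c) (e w g : E) : |bobMean e c w g| ≤ 1 := by
  have hden : 0 ≤ c * |⟪e, g⟫| := by positivity
  rw [bobMean, abs_div, abs_of_nonneg hden]
  exact div_le_one_of_le₀ (abs_half_abs_inner_sub_le hc e w g) hden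

lemma mul_abs_inner_mul_bobMean {c : ℝ} (hc : 0 ≤ c) (e w g : E) :
    c * (|⟪e, g⟫| * bobMean e c w g) = (|⟪w + c • e, g⟫| - |⟪w - c • e, g⟫|) / 2 := by
  rw [← mul_assoc]
  refine mul_div_cancel_of_imp' fun hden => abs_nonpos_iff.1 ?_
  exact (abs_half_abs_inner_sub_le hc e w g).trans hden.le

lemma abs_sign_inner_mul_sub_le {c : ℝ} (hc : 0 ≤ c) (e u w g : E) :
    |sign ⟪u, g⟫ * ⟪w, g⟫ - c * (|⟪e, g⟫| * (aliceAnswer e u g * bobMean e c w g))| ≤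
      (|⟪w + c • e, g⟫| + |⟪w - c • e, g⟫|) / 2 - c * |⟪e, g⟫| := by
  have hfactor : c * (|⟪e, g⟫| * (aliceAnswer e u g * bobMean e c w g)) =
      sign ⟪u, g⟫ * (sign ⟪e, g⟫ * (c * (|⟪e, g⟫| * bobMean e c w g))) := by
    rw [aliceAnswer]
    ring
  rw [hfactor, mul_abs_inner_mul_bobMean hc, ← mul_sub, abs_mul, inner_add_left, inner_sub_left,
    real_inner_smul_left]
  exact (mul_le_of_le_one_left (abs_nonneg _) (abs_sign_coe_le_one _)).trans
    (abs_sub_sign_mul_le hc ⟪w, g⟫ ⟪e, g⟫)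

variable [MeasurableSpace E] [BorelSpace E]

lemma measurable_aliceAnswer (e u : E) : Measurable (aliceAnswer e u) :=
  (measurable_sign_coe.comp (by fun_prop)).mul (measurable_sign_coe.comp (by fun_prop))

lemma measurable_bobMean (e : E) (c : ℝ) (w : E) : Measurable (bobMean e c w) := by
  unfold bobMean
  fun_prop

variable [FiniteDimensional ℝ E]

lemma integral_aliceAnswer {e u : E} (he : ‖e‖ = 1) (hu : ‖u‖ = 1) :
    ∫ g, aliceAnswer e u g ∂sizeBiasedGaussian e = ⟪u, e⟫ := by
  have he0 : e ≠ 0 := ne_zero_of_norm_ne_zero (he ▸ one_ne_zero)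
  have hweighted : ∀ g, |⟪e, g⟫| * aliceAnswer e u g = sign ⟪u, g⟫ * ⟪e, g⟫ := fun g => by
    rw [aliceAnswer, mul_left_comm, abs_mul_sign]
  simp only [integral_sizeBiasedGaussian he0, hweighted]
  rw [integral_sign_inner_mul_inner_stdGaussian hu, gaussianAbsMoment_eq_norm_mul he u, hu,
    one_mul, mul_div_cancel_right₀ _ (gaussianAbsMoment_pos he0).ne']

lemma mul_integral_bobMean {e : E} (he : ‖e‖ = 1) {c : ℝ} (hc : 0 ≤ c) (w : E) :
    c * ∫ g, bobMean e c w g ∂sizeBiasedGaussian e = (‖w + c • e‖ - ‖w - c • e‖) / 2 := by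
  have he0 : e ≠ 0 := ne_zero_of_norm_ne_zero (he ▸ one_ne_zero)
  have hK := (gaussianAbsMoment_pos he0).ne'
  rw [integral_sizeBiasedGaussian he0, ← mul_div_assoc, ← integral_const_mul]
  simp only [mul_abs_inner_mul_bobMean hc]
  rw [integral_div, integral_sub (integrable_inner_stdGaussian _).abs
    (integrable_inner_stdGaussian _).abs, ← gaussianAbsMoment, ← gaussianAbsMoment,
    gaussianAbsMoment_eq_norm_mul he (w + c • e), gaussianAbsMoment_eq_norm_mul he (w - c • e)]
  field_simp

lemma integrable_abs_inner_mul_aliceAnswer_mul_bobMean (e u : E) {c : ℝ} (hc : 0 ≤ c) (w : E) :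
    Integrable (fun g => |⟪e, g⟫| * (aliceAnswer e u g * bobMean e c w g)) (stdGaussian E) := by
  refine (integrable_inner_stdGaussian e).abs.mul_bdd (c := 1)
    ((measurable_aliceAnswer e u).mul (measurable_bobMean e c w)).aestronglyMeasurable
    (Filter.Eventually.of_forall fun g => ?_)
  rw [norm_mul]
  exact mul_le_one₀ (abs_aliceAnswer_le_one e u g) (norm_nonneg _) (abs_bobMean_le_one hc e w g)

lemma abs_integral_sign_inner_mul_sub_le {e : E} (he : ‖e‖ = 1) {c : ℝ} (hc : 0 ≤ c) (u w : E) :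
    |∫ g, (sign ⟪u, g⟫ * ⟪w, g⟫ - c * (|⟪e, g⟫| * (aliceAnswer e u g * bobMean e c w g)))
        ∂stdGaussian E| ≤
      ((‖w + c • e‖ + ‖w - c • e‖) / 2 - c) * gaussianAbsMoment e := by
  have habs : ∀ v : E, Integrable (fun g => |⟪v, g⟫|) (stdGaussian E) := fun v =>
    (integrable_inner_stdGaussian v).abs
  have hsum := ((habs (w + c • e)).fun_add (habs (w - c • e))).div_const 2
  have hfocus := (habs e).const_mul c
  have hbound : Integrable (fun g => (|⟪w + c • e, g⟫| + |⟪w - c • e, g⟫|) / 2 - c * |⟪e, g⟫|)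
      (stdGaussian E) := hsum.sub hfocus
  calc |∫ g, (sign ⟪u, g⟫ * ⟪w, g⟫ - c * (|⟪e, g⟫| * (aliceAnswer e u g * bobMean e c w g)))
        ∂stdGaussian E|
      ≤ ∫ g, ((|⟪w + c • e, g⟫| + |⟪w - c • e, g⟫|) / 2 - c * |⟪e, g⟫|) ∂stdGaussian E :=
        (Real.norm_eq_abs _).symm.trans_le (norm_integral_le_of_norm_le hbound
          (Filter.Eventually.of_forall fun g => abs_sign_inner_mul_sub_le hc e u w g))
    _ = (gaussianAbsMoment (w + c • e) + gaussianAbsMoment (w - c • e)) / 2 -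
          c * gaussianAbsMoment e := by
        rw [integral_sub hsum hfocus, integral_div, integral_add (habs _) (habs _),
          integral_const_mul, gaussianAbsMoment, gaussianAbsMoment, gaussianAbsMoment]
    _ = ((‖w + c • e‖ + ‖w - c • e‖) / 2 - c) * gaussianAbsMoment e := by
        rw [gaussianAbsMoment_eq_norm_mul he (w + c • e),
          gaussianAbsMoment_eq_norm_mul he (w - c • e)]
        ring

lemma abs_inner_sub_mul_integral_le {e u : E} (he : ‖e‖ = 1) (hu : ‖u‖ = 1) {c : ℝ} (hc : 0 ≤ c)
    (w : E) :
    |⟪u, w⟫ - c * ∫ g, aliceAnswer e u g * bobMean e c w g ∂sizeBiasedGaussian e| ≤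
      (‖w + c • e‖ + ‖w - c • e‖) / 2 - c := by
  have he0 : e ≠ 0 := ne_zero_of_norm_ne_zero (he ▸ one_ne_zero)
  have hK := gaussianAbsMoment_pos he0
  have htarget : ∫ g, sign ⟪u, g⟫ * ⟪w, g⟫ ∂stdGaussian E = ⟪u, w⟫ * gaussianAbsMoment e := by
    rw [integral_sign_inner_mul_inner_stdGaussian hu, gaussianAbsMoment_eq_norm_mul he u, hu,
      one_mul]
  have hscaled : (⟪u, w⟫ - c * ∫ g, aliceAnswer e u g * bobMean e c w g ∂sizeBiasedGaussian e) *
      gaussianAbsMoment e = ∫ g, (sign ⟪u, g⟫ * ⟪w, g⟫ -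
        c * (|⟪e, g⟫| * (aliceAnswer e u g * bobMean e c w g))) ∂stdGaussian E := by
    rw [integral_sub (integrable_sign_inner_mul (integrable_inner_stdGaussian w) u)
      ((integrable_abs_inner_mul_aliceAnswer_mul_bobMean e u hc w).const_mul c),
      integral_const_mul, htarget, integral_sizeBiasedGaussian he0, sub_mul, mul_assoc,
      div_mul_cancel₀ _ hK.ne']
  refine le_of_mul_le_mul_right ?_ hK
  rw [← abs_of_pos hK, ← abs_mul, abs_of_pos hK, hscaled]
  exact abs_integral_sign_inner_mul_sub_le he hc u w

/-- The hypothesis on `w y` says that it lies in the ellipsoid of major semi-axis `1` with foci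
`± c • e`. -/
theorem exists_localFree_decomposition {M N : ℕ} {e : E} (he : ‖e‖ = 1) {c : ℝ} (hc : 0 ≤ c)
    {u : Fin M → E} (hu : ∀ x, ‖u x‖ = 1) {w : Fin N → E}
    (hw : ∀ y, ‖w y + c • e‖ + ‖w y - c • e‖ ≤ 2) :
    ∃ PL Q, IsBehaviour PL ∧ LocalFree PL ∧ IsBehaviour Q ∧ ∀ a b x y,
      correlatorTable (fun x => c * ⟪u x, e⟫) (fun y => (‖w y + c • e‖ - ‖w y - c • e‖) / 2)
        (fun x y => ⟪u x, w y⟫) a b x y = c * PL a b x y + (1 - c) * Q a b x y := by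
  have he0 : e ≠ 0 := ne_zero_of_norm_ne_zero (he ▸ one_ne_zero)
  have := isProbabilityMeasure_sizeBiasedGaussian he0
  have hlocal := localFree_correlatorTable (sizeBiasedGaussian e)
    (fun x => measurable_aliceAnswer e (u x)) (fun y => measurable_bobMean e c (w y))
    (fun x => abs_aliceAnswer_le_one e (u x)) (fun y => abs_bobMean_le_one hc e (w y))
  obtain ⟨Q, hQ, hmix⟩ := exists_isBehaviour_mixture
    (fun x y => (abs_inner_sub_mul_integral_le he (hu x) hc (w y)).trans (by linarith [hw y]))
    (fun x => ∫ g, aliceAnswer e (u x) g ∂sizeBiasedGaussian e)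
    (fun y => ∫ g, bobMean e c (w y) g ∂sizeBiasedGaussian e)
  simp only [mul_integral_bobMean he hc, integral_aliceAnswer he (hu _)] at hmix hlocal
  exact ⟨_, Q, hlocal.isBehaviour, hlocal, hQ, hmix⟩

end Model

/-! ### The two-qubit state -/

/-- The vector `w` for which the correlation of `qBehaviour` between the directions `u` and `v` is
`⟪u, w⟫`. -/
def correlationVector (θ : ℝ) (v : EuclideanSpace ℝ (Fin 3)) : EuclideanSpace ℝ (Fin 3) :=
  !₂[Real.sin θ * v 0, -(Real.sin θ * v 1), v 2]

lemma inner_correlationVector (θ : ℝ) (u v : EuclideanSpace ℝ (Fin 3)) :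
    ⟪u, correlationVector θ v⟫ =
      u 2 * v 2 + Real.sin θ * (u 0 * v 0 - u 1 * v 1) := by
  simp [correlationVector, PiLp.inner_apply, Fin.sum_univ_three]
  ring

lemma norm_correlationVector_add {θ d : ℝ} (hd : Real.sin θ ^ 2 + d ^ 2 = 1)
    {v : EuclideanSpace ℝ (Fin 3)} (hv : ‖v‖ = 1) :
    ‖correlationVector θ v + d • EuclideanSpace.single 2 1‖ = 1 + d * v 2 := by
  have hv2 : v 0 ^ 2 + v 1 ^ 2 + v 2 ^ 2 = 1 := by
    rw [← Fin.sum_univ_three fun i => v i ^ 2, ← EuclideanSpace.real_norm_sq_eq, hv, one_pow]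
  have hnonneg : 0 ≤ 1 + d * v 2 := by
    nlinarith [sq_nonneg (d + v 2), sq_nonneg (Real.sin θ), sq_nonneg (v 0), sq_nonneg (v 1)]
  rw [← sq_eq_sq₀ (norm_nonneg _) hnonneg, EuclideanSpace.real_norm_sq_eq, Fin.sum_univ_three]
  simp [correlationVector]
  linear_combination Real.sin θ ^ 2 * hv2 + (1 - v 2 ^ 2) * hd

lemma norm_correlationVector_add_cos (θ : ℝ) {v : EuclideanSpace ℝ (Fin 3)} (hv : ‖v‖ = 1) :
    ‖correlationVector θ v + Real.cos θ • EuclideanSpace.single 2 1‖ = 1 + Real.cos θ * v 2 :=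
  norm_correlationVector_add (Real.sin_sq_add_cos_sq θ) hv

lemma norm_correlationVector_sub_cos (θ : ℝ) {v : EuclideanSpace ℝ (Fin 3)} (hv : ‖v‖ = 1) :
    ‖correlationVector θ v - Real.cos θ • EuclideanSpace.single 2 1‖ = 1 - Real.cos θ * v 2 := by
  have hcos : Real.sin θ ^ 2 + (-Real.cos θ) ^ 2 = 1 := by rw [neg_sq, Real.sin_sq_add_cos_sq]
  rw [sub_eq_add_neg, ← neg_smul, norm_correlationVector_add hcos hv]
  ring

lemma qBehaviour_eq_correlatorTable {M N : ℕ} (θ : ℝ) (u : Fin M → EuclideanSpace ℝ (Fin 3))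
    (v : Fin N → EuclideanSpace ℝ (Fin 3)) :
    qBehaviour θ u v = correlatorTable (fun x => Real.cos θ * u x 2)
      (fun y => Real.cos θ * v y 2) fun x y => ⟪u x, correlationVector θ (v y)⟫ := by
  funext a b x y
  simp only [qBehaviour, correlatorTable, inner_correlationVector, mul_assoc]

theorem qstate_local_decomposition_general {θ : ℝ} (hθ : 0 ≤ Real.cos θ)
    {M N : ℕ} {u : Fin M → EuclideanSpace ℝ (Fin 3)} {v : Fin N → EuclideanSpace ℝ (Fin 3)}
    (hu : ∀ x, ‖u x‖ = 1) (hv : ∀ y, ‖v y‖ = 1) :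
    (∃ PL Q : Bool → Bool → Fin M → Fin N → ℝ,
      IsBehaviour PL ∧ LocalFree PL ∧ IsBehaviour Q ∧
      ∀ a b x y, qBehaviour θ u v a b x y =
        Real.cos θ * PL a b x y + (1 - Real.cos θ) * Q a b x y) ∧
    Real.cos θ ≤ sSup {p : ℝ | p ∈ Set.Icc (0 : ℝ) 1 ∧
      ∃ PL Q : Bool → Bool → Fin M → Fin N → ℝ,
        IsBehaviour PL ∧ LocalFree PL ∧ IsBehaviour Q ∧
        ∀ a b x y, qBehaviour θ u v a b x y = p * PL a b x y + (1 - p) * Q a b x y} := by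
  have hadd := fun y => norm_correlationVector_add_cos θ (hv y)
  have hsub := fun y => norm_correlationVector_sub_cos θ (hv y)
  have hellipsoid : ∀ y,
      ‖correlationVector θ (v y) + Real.cos θ • EuclideanSpace.single 2 1‖ +
        ‖correlationVector θ (v y) - Real.cos θ • EuclideanSpace.single 2 1‖ ≤ 2 := fun y => by
    rw [hadd, hsub]
    linarith
  have hmarginal : ∀ y, (1 + Real.cos θ * v y 2 - (1 - Real.cos θ * v y 2)) / 2 =
      Real.cos θ * v y 2 := fun y => by ring
  have hdecomp := exists_localFree_decomposition (by simp) hθ hu hellipsoid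
  simp only [hadd, hsub, hmarginal, EuclideanSpace.inner_single_right, conj_trivial, one_mul,
    ← qBehaviour_eq_correlatorTable] at hdecomp
  exact ⟨hdecomp, le_csSup ⟨1, fun p hp => hp.1.2⟩ ⟨⟨hθ, Real.cos_le_one θ⟩, hdecomp⟩⟩

theorem qstate_local_decomposition (θ : ℝ) (hθ : θ ∈ Set.Icc (0 : ℝ) (Real.pi / 2))
    {M N : ℕ} (u : Fin M → EuclideanSpace ℝ (Fin 3)) (v : Fin N → EuclideanSpace ℝ (Fin 3))
    (hu : ∀ x, ‖u x‖ = 1) (hv : ∀ y, ‖v y‖ = 1) :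
    (∃ PL Q : Bool → Bool → Fin M → Fin N → ℝ,
      IsBehaviour PL ∧ LocalFree PL ∧ IsBehaviour Q ∧
      ∀ a b x y, qBehaviour θ u v a b x y =
        Real.cos θ * PL a b x y + (1 - Real.cos θ) * Q a b x y) ∧
    Real.cos θ ≤ sSup {p : ℝ | p ∈ Set.Icc (0 : ℝ) 1 ∧
      ∃ PL Q : Bool → Bool → Fin M → Fin N → ℝ,
        IsBehaviour PL ∧ LocalFree PL ∧ IsBehaviour Q ∧
        ∀ a b x y, qBehaviour θ u v a b x y = p * PL a b x y + (1 - p) * Q a b x y} := by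
  exact qstate_local_decomposition_general
    (Real.cos_nonneg_of_mem_Icc ⟨by linarith [hθ.1, Real.pi_pos], hθ.2⟩) hu hv
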